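/- Purified samples offer no advantage (Corollary corollary:purification-useless): Let Q = (Qyes, Qno) be a pair of disjoint sets of density matrices on Fin d, let 0 ≤ s < c ≤ 1, and let N ≥ 1. Then there exists a (c,s)-tester for Q with sample complexity N if and only if there exists a (c,s)-tester for Purify(Q) with sample complexity N, where Purify(Q) = (Purify(Qyes), Purify(Qno)) is the property of bipartite pure states in ℂ^d ⊗ ℂ^d given by Purify(R) = { unit vectors ψ : (Fin d × Fin d) → ℂ such that tr_B(ψψ†) ∈ R }. -/

import Mathlib

open scoped ComplexConjugate ComplexOrder Kronecker Matrix
open MeasureTheory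

namespace PaperStmt

/-- The rank-one matrix `ψψ†` associated with a vector `ψ`. -/
noncomputable def outer {ι : Type*} (ψ : ι → ℂ) : Matrix ι ι ℂ :=
  Matrix.of fun x y => ψ x * conj (ψ y)

/-- The `N`-fold tensor power of a square matrix `ρ`. -/
noncomputable def tpow {ι : Type*} (ρ : Matrix ι ι ℂ) (N : ℕ) : Matrix (Fin N → ι) (Fin N → ι) ℂ :=
  Matrix.of fun x y => ∏ i, ρ (x i) (y i)

/-- `ψ` is a unit vector (for the ℓ² norm). -/
def IsUnitVec {ι : Type*} [Fintype ι] (ψ : ι → ℂ) : Prop :=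
  ∑ x, Complex.normSq (ψ x) = 1

/-- `0 ⊑ T ⊑ 1` in the Loewner order. -/
def IsTester {κ : Type*} [Fintype κ] [DecidableEq κ] (T : Matrix κ κ ℂ) : Prop :=
  T.PosSemidef ∧ ((1 : Matrix κ κ ℂ) - T).PosSemidef

/-- `ρ` is a density matrix: positive semidefinite with unit trace. -/
def IsDensity {ι : Type*} [Fintype ι] (ρ : Matrix ι ι ℂ) : Prop :=
  ρ.PosSemidef ∧ ρ.trace = 1

/-- The acceptance probability `tr (T · ρ^{⊗N})` of a tester `T` on `N` samples of `ρ`. -/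
noncomputable def acc {ι : Type*} [Fintype ι] {N : ℕ}
    (T : Matrix (Fin N → ι) (Fin N → ι) ℂ) (ρ : Matrix ι ι ℂ) : ℝ :=
  ((T * tpow ρ N).trace).re

/-- The trace distance `½ ∑ᵢ |λᵢ(ρ - σ)|` between (Hermitian) matrices. -/
noncomputable def traceDist {κ : Type*} [Fintype κ] [DecidableEq κ]
    (ρ σ : Matrix κ κ ℂ) : ℝ :=
  if h : (ρ - σ).IsHermitian then (1 / 2) * ∑ i, |h.eigenvalues i| else 0

/-- The local tester on `H_A` determined by a matrix `M` acting on Alice's registers. -/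
noncomputable def localA {d N : ℕ} (M : Matrix (Fin N → Fin d) (Fin N → Fin d) ℂ) :
    Matrix (Fin N → Fin d × Fin d) (Fin N → Fin d × Fin d) ℂ :=
  Matrix.of fun x y =>
    M (fun i => (x i).1) (fun i => (y i).1) *
      (if (fun i => (x i).2) = (fun i => (y i).2) then 1 else 0)

/-- The vector `(I ⊗ U) ψ` : the unitary `U` applied to the `B` part of `ψ`. -/
noncomputable def applyB {d : ℕ} (U : Matrix (Fin d) (Fin d) ℂ) (ψ : Fin d × Fin d → ℂ) :
    Fin d × Fin d → ℂ :=
  fun p => ∑ k, U p.2 k * ψ (p.1, k)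

/-- The partial trace over the second (`B`) tensor factor. -/
noncomputable def ptraceB {d : ℕ} (M : Matrix (Fin d × Fin d) (Fin d × Fin d) ℂ) :
    Matrix (Fin d) (Fin d) ℂ :=
  Matrix.of fun a b => ∑ j, M (a, j) (b, j)

/-!
A tester for mixed states becomes a tester for purifications by ignoring the `B` factors.
Conversely, write `|A⟩⟩` for the bipartite vector with coefficient matrix `A`, so that all the
`|ρ^{1/2} U⟩⟩` with `U` unitary purify `ρ`. Let `G` be the Haar average of `|U⟩⟩⟨⟨U|^{⊗N}`; then
`tr_B G = 1`, and by left invariance `G` commutes with `V^{⊗N} ⊗ 1` for unitary `V`. It then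
commutes with `S^{⊗N} ⊗ 1` for Hermitian `S` as well: diagonalize `S`, and note that commuting with
the diagonal unitaries already forces `G` to preserve weights. Hence `R = tr_B (√G T √G)` satisfies
`0 ⊑ R ⊑ 1` and, with `S = ρ^{1/2}`,
`tr (R ρ^{⊗N}) = tr (T (S^{⊗N} ⊗ 1) G (S^{⊗N} ⊗ 1))`,
which is the average over `U` of the acceptance probabilities of `T` on the purifications `|S U⟩⟩`.
-/

section TensorPower

variable {ι κ : Type*}

theorem tpow_mul [Fintype ι] (A B : Matrix ι ι ℂ) (N : ℕ) :
    tpow (A * B) N = tpow A N * tpow B N := by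
  ext x y
  simp only [tpow, Matrix.of_apply, Matrix.mul_apply, Finset.prod_univ_sum, Fintype.piFinset_univ,
    Finset.prod_mul_distrib]

theorem tpow_conjTranspose (A : Matrix ι ι ℂ) (N : ℕ) : tpow Aᴴ N = (tpow A N)ᴴ := by
  ext x y
  simp [tpow, Matrix.conjTranspose_apply]

theorem tpow_diagonal [DecidableEq ι] (D : ι → ℂ) (N : ℕ) :
    tpow (Matrix.diagonal D) N = Matrix.diagonal fun x => ∏ i, D (x i) := by
  ext x y
  obtain rfl | hxy := eq_or_ne x y
  · simp [tpow]
  · obtain ⟨i, hi⟩ := Function.ne_iff.mp hxy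
    rw [Matrix.diagonal_apply_ne _ hxy]
    exact Finset.prod_eq_zero (Finset.mem_univ i) (Matrix.diagonal_apply_ne _ hi)

theorem tpow_one [DecidableEq ι] (N : ℕ) : tpow (1 : Matrix ι ι ℂ) N = 1 := by
  rw [← Matrix.diagonal_one, tpow_diagonal]
  simp

theorem continuous_tpow (N : ℕ) : Continuous fun A : Matrix ι ι ℂ => tpow A N :=
  continuous_matrix fun x y =>
    continuous_finsetProd Finset.univ fun i _ => continuous_id.matrix_elem (x i) (y i)

theorem outer_eq_vecMulVec (ψ : ι → ℂ) : outer ψ = Matrix.vecMulVec ψ (star ψ) :=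
  rfl

theorem outer_mulVec [Fintype ι] (M : Matrix κ ι ℂ) (ψ : ι → ℂ) :
    outer (M *ᵥ ψ) = M * outer ψ * Mᴴ := by
  simp only [outer_eq_vecMulVec, Matrix.mul_vecMulVec, Matrix.vecMulVec_mul, Matrix.star_mulVec]

theorem tpow_outer (ψ : ι → ℂ) (N : ℕ) : tpow (outer ψ) N = outer fun x => ∏ i, ψ (x i) := by
  ext x y
  simp [tpow, outer, Finset.prod_mul_distrib]

theorem posSemidef_tpow_outer [Finite ι] (ψ : ι → ℂ) (N : ℕ) : (tpow (outer ψ) N).PosSemidef := by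
  rw [tpow_outer, outer_eq_vecMulVec]
  exact Matrix.posSemidef_vecMulVec_self_star _

theorem continuous_outer : Continuous (outer : (ι → ℂ) → Matrix ι ι ℂ) :=
  continuous_id.matrix_vecMulVec continuous_star

theorem continuous_trace_mul_tpow [Fintype ι] {N : ℕ} (T : Matrix (Fin N → ι) (Fin N → ι) ℂ) :
    Continuous fun ρ : Matrix ι ι ℂ => (T * tpow ρ N).trace :=
  (continuous_const.matrix_mul (continuous_tpow N)).matrix_trace

theorem continuous_acc [Fintype ι] {N : ℕ} (T : Matrix (Fin N → ι) (Fin N → ι) ℂ) :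
    Continuous (acc T) :=
  Complex.continuous_re.comp (continuous_trace_mul_tpow T)

end TensorPower

section LocalOperators

variable {d N : ℕ}

theorem localA_eq_submatrix_kronecker (M : Matrix (Fin N → Fin d) (Fin N → Fin d) ℂ) :
    localA M = (M ⊗ₖ (1 : Matrix (Fin N → Fin d) (Fin N → Fin d) ℂ)).submatrix
      (Equiv.arrowProdEquivProdArrow (Fin N) (fun _ => Fin d) fun _ => Fin d)
      (Equiv.arrowProdEquivProdArrow (Fin N) (fun _ => Fin d) fun _ => Fin d) := by
  ext x y
  simp [localA, Matrix.one_apply]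

theorem localA_mul (A B : Matrix (Fin N → Fin d) (Fin N → Fin d) ℂ) :
    localA (A * B) = localA A * localA B := by
  simp only [localA_eq_submatrix_kronecker, Matrix.submatrix_mul_equiv, ← Matrix.mul_kronecker_mul,
    mul_one]

theorem localA_one : localA (1 : Matrix (Fin N → Fin d) (Fin N → Fin d) ℂ) = 1 := by
  rw [localA_eq_submatrix_kronecker, Matrix.one_kronecker_one, Matrix.submatrix_one_equiv]

theorem localA_sub (A B : Matrix (Fin N → Fin d) (Fin N → Fin d) ℂ) :
    localA (A - B) = localA A - localA B := by
  ext x y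
  simp only [localA, Matrix.of_apply, Matrix.sub_apply, sub_mul]

theorem localA_conjTranspose (M : Matrix (Fin N → Fin d) (Fin N → Fin d) ℂ) :
    localA Mᴴ = (localA M)ᴴ := by
  simp only [localA_eq_submatrix_kronecker, Matrix.conjTranspose_submatrix,
    Matrix.conjTranspose_kronecker, Matrix.conjTranspose_one]

theorem posSemidef_localA {M : Matrix (Fin N → Fin d) (Fin N → Fin d) ℂ} (hM : M.PosSemidef) :
    (localA M).PosSemidef := by
  rw [localA_eq_submatrix_kronecker]
  exact (hM.kronecker Matrix.PosSemidef.one).submatrix _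

theorem isTester_localA {T : Matrix (Fin N → Fin d) (Fin N → Fin d) ℂ} (hT : IsTester T) :
    IsTester (localA T) := by
  refine ⟨posSemidef_localA hT.1, ?_⟩
  rw [← localA_one, ← localA_sub]
  exact posSemidef_localA hT.2

theorem localA_tpow (A : Matrix (Fin d) (Fin d) ℂ) :
    localA (tpow A N) = tpow (A ⊗ₖ (1 : Matrix (Fin d) (Fin d) ℂ)) N := by
  ext x y
  have tpow_one_apply := congrFun₂ (tpow_one (ι := Fin d) N) (fun i => (x i).2) fun i => (y i).2
  simp only [tpow, Matrix.of_apply, Matrix.one_apply] at tpow_one_apply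
  simp only [localA, tpow, Matrix.of_apply, Matrix.kroneckerMap_apply, Finset.prod_mul_distrib,
    Matrix.one_apply, tpow_one_apply]

theorem localA_tpow_diagonal (D : Fin d → ℂ) :
    localA (tpow (Matrix.diagonal D) N) = Matrix.diagonal fun x => ∏ i, D (x i).1 := by
  rw [localA_tpow, ← Matrix.diagonal_one, Matrix.diagonal_kronecker_diagonal, tpow_diagonal]
  simp only [mul_one]

/-- The partial trace over the `B` factors of all `N` copies, as a linear map. -/
noncomputable def ptraceBPow :
    Matrix (Fin N → Fin d × Fin d) (Fin N → Fin d × Fin d) ℂ →ₗ[ℂ]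
      Matrix (Fin N → Fin d) (Fin N → Fin d) ℂ where
  toFun K := ∑ b : Fin N → Fin d, K.submatrix (fun a i => (a i, b i)) (fun a i => (a i, b i))
  map_add' K L := by simp only [Matrix.submatrix_add, Pi.add_apply, Finset.sum_add_distrib]
  map_smul' z K := by
    simp only [Matrix.submatrix_smul, Pi.smul_apply, Finset.smul_sum, RingHom.id_apply]

theorem ptraceBPow_apply (K : Matrix (Fin N → Fin d × Fin d) (Fin N → Fin d × Fin d) ℂ)
    (a a' : Fin N → Fin d) :
    ptraceBPow K a a' = ∑ b : Fin N → Fin d, K (fun i => (a i, b i)) fun i => (a' i, b i) :=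
  Matrix.sum_apply a a' Finset.univ _

theorem posSemidef_ptraceBPow {K : Matrix (Fin N → Fin d × Fin d) (Fin N → Fin d × Fin d) ℂ}
    (hK : K.PosSemidef) : (ptraceBPow K).PosSemidef :=
  Matrix.posSemidef_sum _ fun _ _ => hK.submatrix _

theorem ptraceBPow_tpow (M : Matrix (Fin d × Fin d) (Fin d × Fin d) ℂ) :
    ptraceBPow (tpow M N) = tpow (ptraceB M) N := by
  ext a a'
  simp only [ptraceBPow_apply, tpow, ptraceB, Matrix.of_apply, Finset.prod_univ_sum,
    Fintype.piFinset_univ]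

theorem trace_mul_localA (K : Matrix (Fin N → Fin d × Fin d) (Fin N → Fin d × Fin d) ℂ)
    (M : Matrix (Fin N → Fin d) (Fin N → Fin d) ℂ) :
    (K * localA M).trace = (ptraceBPow K * M).trace := by
  have sum_registers (f : (Fin N → Fin d × Fin d) → ℂ) :
      ∑ x, f x = ∑ a : Fin N → Fin d, ∑ b : Fin N → Fin d, f fun i => (a i, b i) := by
    rw [← Fintype.sum_prod_type' fun (a b : Fin N → Fin d) => f fun i => (a i, b i)]
    exact Fintype.sum_equiv (Equiv.arrowProdEquivProdArrow _ _ _) _ _ fun _ => rfl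
  simp only [Matrix.trace, Matrix.diag, Matrix.mul_apply, sum_registers, localA, Matrix.of_apply,
    ptraceBPow_apply, mul_ite, mul_one, mul_zero, Finset.sum_ite_eq', Finset.sum_mul,
    Finset.mem_univ, if_true]
  exact Finset.sum_congr rfl fun a _ => Finset.sum_comm

theorem acc_localA (T : Matrix (Fin N → Fin d) (Fin N → Fin d) ℂ)
    (M : Matrix (Fin d × Fin d) (Fin d × Fin d) ℂ) :
    acc (localA T) M = acc T (ptraceB M) := by
  rw [acc, acc, Matrix.trace_mul_comm, trace_mul_localA, ptraceBPow_tpow, Matrix.trace_mul_comm]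

end LocalOperators

section Torus

variable {ι κ : Type*} [Fintype ι] [Fintype κ] [DecidableEq κ] {m : κ → ι → ℕ} {G : Matrix κ κ ℂ}

theorem weight_eq_of_commute_torus
    (hG : ∀ t : ι → ℂ, (∀ j, ‖t j‖ = 1) → Commute (Matrix.diagonal fun x => ∏ j, t j ^ m x j) G)
    {x y : κ} (hxy : G x y ≠ 0) : m x = m y := by
  classical
  ext j
  have order_ne_zero : m x j + m y j + 1 ≠ 0 := Nat.succ_ne_zero _
  -- A root of unity of large order in the `j`-th coordinate of the torus separates the weights.
  obtain ⟨ζ, hζ⟩ : ∃ ζ : ℂ, IsPrimitiveRoot ζ (m x j + m y j + 1) :=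
    ⟨_, Complex.isPrimitiveRoot_exp _ order_ne_zero⟩
  have norm_torus (k : ι) : ‖(Pi.mulSingle j ζ : ι → ℂ) k‖ = 1 := by
    obtain rfl | hk := eq_or_ne k j
    · simpa using hζ.norm'_eq_one order_ne_zero
    · simp [hk]
  have prod_torus (z : κ) : ∏ k, (Pi.mulSingle j ζ : ι → ℂ) k ^ m z k = ζ ^ m z j := by
    rw [Fintype.prod_eq_single j fun k hk => by simp [hk], Pi.mulSingle_eq_same]
  have entry_eq := congrFun₂ (hG _ norm_torus).eq x y
  simp only [Matrix.diagonal_mul, Matrix.mul_diagonal, prod_torus, mul_comm (G x y)] at entry_eq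
  exact hζ.pow_inj (by lia) (by lia) (mul_right_cancel₀ hxy entry_eq)

theorem commute_diagonal_of_commute_torus
    (hG : ∀ t : ι → ℂ, (∀ j, ‖t j‖ = 1) → Commute (Matrix.diagonal fun x => ∏ j, t j ^ m x j) G)
    (D : ι → ℂ) : Commute (Matrix.diagonal fun x => ∏ j, D j ^ m x j) G := by
  ext x y
  rw [Matrix.diagonal_mul, Matrix.mul_diagonal, mul_comm]
  by_cases hxy : G x y = 0
  · simp only [hxy, zero_mul]
  · rw [weight_eq_of_commute_torus hG hxy]

end Torus

theorem diagonal_mem_unitaryGroup {n : Type*} [Fintype n] [DecidableEq n] {t : n → ℂ}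
    (ht : ∀ j, ‖t j‖ = 1) : Matrix.diagonal t ∈ Matrix.unitaryGroup n ℂ := by
  rw [Matrix.mem_unitaryGroup_iff, Matrix.star_eq_conjTranspose, Matrix.diagonal_conjTranspose,
    Matrix.diagonal_mul_diagonal, ← Matrix.diagonal_one]
  congr 1
  ext j
  simp [Complex.mul_conj, Complex.normSq_eq_norm_sq, ht j]

section CommuteUnitary

variable {d N : ℕ} {G : Matrix (Fin N → Fin d × Fin d) (Fin N → Fin d × Fin d) ℂ}

theorem commute_localA_tpow_diagonal
    (hG : ∀ U ∈ Matrix.unitaryGroup (Fin d) ℂ, Commute (localA (tpow U N)) G) (D : Fin d → ℂ) :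
    Commute (localA (tpow (Matrix.diagonal D) N)) G := by
  have localA_eq_weights (t : Fin d → ℂ) : localA (tpow (Matrix.diagonal t) N) =
      Matrix.diagonal fun x => ∏ j, t j ^ (Finset.univ.filter fun i => (x i).1 = j).card := by
    simp_rw [localA_tpow_diagonal, ← Finset.prod_const, Finset.prod_fiberwise']
  rw [localA_eq_weights]
  refine commute_diagonal_of_commute_torus (fun t ht => ?_) D
  rw [← localA_eq_weights]
  exact hG _ (diagonal_mem_unitaryGroup ht)

theorem commute_localA_tpow_of_isHermitian
    (hG : ∀ U ∈ Matrix.unitaryGroup (Fin d) ℂ, Commute (localA (tpow U N)) G)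
    {H : Matrix (Fin d) (Fin d) ℂ} (hH : H.IsHermitian) : Commute (localA (tpow H N)) G := by
  rw [hH.spectral_theorem, Unitary.conjStarAlgAut_apply, tpow_mul, tpow_mul, localA_mul, localA_mul]
  exact ((hG _ hH.eigenvectorUnitary.2).mul_left (commute_localA_tpow_diagonal hG _)).mul_left
    (hG _ (star hH.eigenvectorUnitary).2)

end CommuteUnitary

section Purification

/-- The bipartite vector `∑ᵢⱼ Aᵢⱼ |i⟩|j⟩`, a purification of `A * Aᴴ`. The transpose is there
because `Matrix.vec` stacks columns. -/
def purification {m n : Type*} (A : Matrix m n ℂ) : m × n → ℂ :=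
  Aᵀ.vec

variable {d N : ℕ}

theorem continuous_purification {m n : Type*} :
    Continuous (purification : Matrix m n ℂ → m × n → ℂ) :=
  continuous_pi fun p => continuous_id.matrix_elem p.1 p.2

theorem purification_mul {l m n : Type*} [Fintype m] [Fintype n] [DecidableEq n]
    (S : Matrix l m ℂ) (A : Matrix m n ℂ) :
    purification (S * A) = (S ⊗ₖ (1 : Matrix n n ℂ)) *ᵥ purification A := by
  simp only [purification, Matrix.kronecker_mulVec_vec, Matrix.transpose_mul, Matrix.one_mul]

theorem isUnitVec_purification {m n : Type*} [Fintype m] [Fintype n] {A : Matrix m n ℂ}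
    (hA : (A * Aᴴ).trace = 1) : IsUnitVec (purification A) := by
  have sum_eq_trace : ((∑ p, Complex.normSq (purification A p) : ℝ) : ℂ) = (A * Aᴴ).trace := by
    simp [Matrix.trace, Matrix.mul_apply, purification, Fintype.sum_prod_type, Complex.mul_conj]
  exact_mod_cast sum_eq_trace.trans hA

theorem ptraceB_outer_purification (A : Matrix (Fin d) (Fin d) ℂ) :
    ptraceB (outer (purification A)) = A * Aᴴ := by
  ext a b
  simp [ptraceB, outer, purification, Matrix.mul_apply]

theorem tpow_outer_purification_mul (S A : Matrix (Fin d) (Fin d) ℂ) :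
    tpow (outer (purification (S * A))) N =
      localA (tpow S N) * tpow (outer (purification A)) N * (localA (tpow S N))ᴴ := by
  rw [purification_mul, outer_mulVec, tpow_mul, tpow_mul, tpow_conjTranspose, localA_tpow]

end Purification

section HaarAverage

instance compactSpace_unitaryGroup {n 𝕜 : Type*} [Fintype n] [DecidableEq n] [RCLike 𝕜] :
    CompactSpace (Matrix.unitaryGroup n 𝕜) := by
  have isCompact_entries_le_one : IsCompact
      (Set.univ.pi fun _ : n => Set.univ.pi fun _ : n => Metric.closedBall (0 : 𝕜) 1) :=
    isCompact_univ_pi fun _ => isCompact_univ_pi fun _ => isCompact_closedBall _ _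
  refine isCompact_iff_compactSpace.mp
    (isCompact_entries_le_one.of_isClosed_subset (isClosed_unitary (R := Matrix n n 𝕜)) ?_)
  intro U hU i _ j _
  simpa using entry_norm_bound_of_unitary hU i j

instance borel_unitaryGroup {n 𝕜 : Type*} [Fintype n] [DecidableEq n] [RCLike 𝕜] :
    MeasurableSpace (Matrix.unitaryGroup n 𝕜) :=
  borel _

instance borelSpace_unitaryGroup {n 𝕜 : Type*} [Fintype n] [DecidableEq n] [RCLike 𝕜] :
    BorelSpace (Matrix.unitaryGroup n 𝕜) :=
  ⟨rfl⟩

instance isProbabilityMeasure_haarMeasure_top {Γ : Type*} [Group Γ] [TopologicalSpace Γ]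
    [IsTopologicalGroup Γ] [CompactSpace Γ] [MeasurableSpace Γ] [BorelSpace Γ] :
    IsProbabilityMeasure (Measure.haarMeasure (⊤ : TopologicalSpace.PositiveCompacts Γ)) :=
  ⟨by simpa using Measure.haarMeasure_self (K₀ := (⊤ : TopologicalSpace.PositiveCompacts Γ))⟩

/-- The Haar probability measure on the unitary group `U(n)`. -/
noncomputable abbrev haarUnitary (n : Type*) [Fintype n] [DecidableEq n] :
    Measure (Matrix.unitaryGroup n ℂ) :=
  Measure.haarMeasure ⊤

open scoped Matrix.Norms.L2Operator MatrixOrder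

/-- The Haar average over `U ∈ U(d)` of the `N`-th tensor powers of the unnormalized maximally
entangled states `purification U`. -/
noncomputable def maxEntangledAverage (d N : ℕ) :
    Matrix (Fin N → Fin d × Fin d) (Fin N → Fin d × Fin d) ℂ :=
  ∫ U, tpow (outer (purification U.1)) N ∂haarUnitary (Fin d)

variable {d N : ℕ}

theorem integrable_tpow_outer_purification :
    Integrable (fun U : Matrix.unitaryGroup (Fin d) ℂ => tpow (outer (purification U.1)) N)
      (haarUnitary (Fin d)) :=
  ((continuous_tpow N).comp (continuous_outer.comp (continuous_purification.comp
    continuous_subtype_val))).integrable_of_hasCompactSupport (HasCompactSupport.of_compactSpace _)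

theorem map_maxEntangledAverage {E : Type*} [NormedAddCommGroup E] [NormedSpace ℂ E]
    [CompleteSpace E]
    (φ : Matrix (Fin N → Fin d × Fin d) (Fin N → Fin d × Fin d) ℂ →ₗ[ℂ] E) :
    φ (maxEntangledAverage d N) =
      ∫ U, φ (tpow (outer (purification U.1)) N) ∂haarUnitary (Fin d) :=
  (φ.toContinuousLinearMap.integral_comp_comm integrable_tpow_outer_purification).symm

theorem posSemidef_maxEntangledAverage : (maxEntangledAverage d N).PosSemidef :=
  Matrix.nonneg_iff_posSemidef.mp <| integral_nonneg fun _ =>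
    Matrix.nonneg_iff_posSemidef.mpr (posSemidef_tpow_outer _ _)

theorem ptraceBPow_maxEntangledAverage : ptraceBPow (maxEntangledAverage d N) = 1 := by
  have ptraceBPow_eq_one (U : Matrix.unitaryGroup (Fin d) ℂ) :
      ptraceBPow (tpow (outer (purification U.1)) N) = 1 := by
    rw [ptraceBPow_tpow, ptraceB_outer_purification, ← Matrix.star_eq_conjTranspose,
      Matrix.mem_unitaryGroup_iff.mp U.2, tpow_one]
  simp only [map_maxEntangledAverage, ptraceBPow_eq_one, integral_const, probReal_univ, one_smul]

theorem commute_localA_tpow_maxEntangledAverage {V : Matrix (Fin d) (Fin d) ℂ}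
    (hV : V ∈ Matrix.unitaryGroup (Fin d) ℂ) :
    Commute (localA (tpow V N)) (maxEntangledAverage d N) := by
  have conj_eq : localA (tpow V N) * maxEntangledAverage d N * (localA (tpow V N))ᴴ =
      maxEntangledAverage d N :=
    calc localA (tpow V N) * maxEntangledAverage d N * (localA (tpow V N))ᴴ
        = ∫ U, localA (tpow V N) * tpow (outer (purification U.1)) N * (localA (tpow V N))ᴴ
            ∂haarUnitary (Fin d) :=
          map_maxEntangledAverage
            (LinearMap.mulLeftRight ℂ (localA (tpow V N), (localA (tpow V N))ᴴ))
      _ = ∫ U, tpow (outer (purification ((⟨V, hV⟩ * U : Matrix.unitaryGroup (Fin d) ℂ) :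
            Matrix (Fin d) (Fin d) ℂ))) N ∂haarUnitary (Fin d) := by
          simp only [← tpow_outer_purification_mul, Submonoid.coe_mul]
      _ = maxEntangledAverage d N :=
          integral_mul_left_eq_self
            (fun U : Matrix.unitaryGroup (Fin d) ℂ => tpow (outer (purification U.1)) N) ⟨V, hV⟩
  have isometry : (localA (tpow V N))ᴴ * localA (tpow V N) = 1 := by
    rw [← localA_conjTranspose, ← tpow_conjTranspose, ← localA_mul, ← tpow_mul,
      ← Matrix.star_eq_conjTranspose, Matrix.mem_unitaryGroup_iff'.mp hV, tpow_one, localA_one]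
  calc localA (tpow V N) * maxEntangledAverage d N
      = localA (tpow V N) * maxEntangledAverage d N * (localA (tpow V N))ᴴ * localA (tpow V N) := by
        rw [mul_assoc _ _ (localA (tpow V N)), isometry, mul_one]
    _ = maxEntangledAverage d N * localA (tpow V N) := by rw [conj_eq]

/-- The tester on `N` copies of a mixed state obtained from a tester `T` on `N` copies of a
bipartite pure state, by conjugating `T` with `√G`, where `G` is `maxEntangledAverage d N`, and
tracing out the `B` factors. -/
noncomputable def reducedTester (T : Matrix (Fin N → Fin d × Fin d) (Fin N → Fin d × Fin d) ℂ) :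
    Matrix (Fin N → Fin d) (Fin N → Fin d) ℂ :=
  ptraceBPow (CFC.sqrt (maxEntangledAverage d N) * T * CFC.sqrt (maxEntangledAverage d N))

variable {T : Matrix (Fin N → Fin d × Fin d) (Fin N → Fin d × Fin d) ℂ}

theorem sqrt_maxEntangledAverage_mul_self :
    CFC.sqrt (maxEntangledAverage d N) * CFC.sqrt (maxEntangledAverage d N) =
      maxEntangledAverage d N :=
  CFC.sqrt_mul_sqrt_self _ posSemidef_maxEntangledAverage.nonneg

theorem posSemidef_reducedTester (hT : T.PosSemidef) : (reducedTester T).PosSemidef := by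
  have sqrt_isHermitian : (CFC.sqrt (maxEntangledAverage d N)).IsHermitian :=
    (Matrix.nonneg_iff_posSemidef.mp (CFC.sqrt_nonneg _)).isHermitian
  have conj_posSemidef := hT.mul_mul_conjTranspose_same (CFC.sqrt (maxEntangledAverage d N))
  rw [sqrt_isHermitian.eq] at conj_posSemidef
  exact posSemidef_ptraceBPow conj_posSemidef

theorem reducedTester_one_sub : reducedTester (1 - T) = 1 - reducedTester T := by
  rw [reducedTester, mul_sub, sub_mul, mul_one, sqrt_maxEntangledAverage_mul_self, map_sub,
    ptraceBPow_maxEntangledAverage, reducedTester]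

theorem isTester_reducedTester (hT : IsTester T) : IsTester (reducedTester T) :=
  ⟨posSemidef_reducedTester hT.1, reducedTester_one_sub (T := T) ▸ posSemidef_reducedTester hT.2⟩

theorem trace_reducedTester_mul_tpow {S : Matrix (Fin d) (Fin d) ℂ} (hS : S.IsHermitian) :
    (reducedTester T * tpow (S * S) N).trace =
      ∫ U, (T * tpow (outer (purification (S * U.1))) N).trace ∂haarUnitary (Fin d) := by
  set G := maxEntangledAverage d N
  set Λ := localA (tpow S N) with hΛ
  have Λ_star : Λᴴ = Λ := by rw [hΛ, ← localA_conjTranspose, ← tpow_conjTranspose, hS.eq]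
  have Λ_comm : Commute Λ G :=
    commute_localA_tpow_of_isHermitian (fun _ => commute_localA_tpow_maxEntangledAverage) hS
  have Λ_comm_sqrt : Commute (CFC.sqrt G) Λ := by
    rw [CFC.sqrt_eq_cfc]
    exact Λ_comm.symm.cfc_nnreal _
  have sqrt_conj : CFC.sqrt G * (Λ * Λ) * CFC.sqrt G = Λ * G * Λᴴ := by
    rw [(Λ_comm_sqrt.mul_right Λ_comm_sqrt).eq, mul_assoc, sqrt_maxEntangledAverage_mul_self,
      Λ_star, mul_assoc Λ Λ, mul_assoc Λ G, ← Λ_comm.eq]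
  calc (reducedTester T * tpow (S * S) N).trace
      = (CFC.sqrt G * T * CFC.sqrt G * (Λ * Λ)).trace := by
        rw [reducedTester, ← trace_mul_localA, tpow_mul, localA_mul]
    _ = (T * (CFC.sqrt G * (Λ * Λ) * CFC.sqrt G)).trace := by
        rw [mul_assoc, mul_assoc, Matrix.trace_mul_comm, mul_assoc]
    _ = (T * (Λ * G * Λᴴ)).trace := by rw [sqrt_conj]
    _ = ∫ U, (T * (Λ * tpow (outer (purification U.1)) N * Λᴴ)).trace ∂haarUnitary (Fin d) :=
        map_maxEntangledAverage (Matrix.traceLinearMap _ ℂ ℂ ∘ₗ LinearMap.mulLeft ℂ T ∘ₗ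
          LinearMap.mulLeftRight ℂ (Λ, Λᴴ))
    _ = ∫ U, (T * tpow (outer (purification (S * U.1))) N).trace ∂haarUnitary (Fin d) := by
        simp only [hΛ, tpow_outer_purification_mul]

theorem continuous_outer_purification_mul_unitary (S : Matrix (Fin d) (Fin d) ℂ) :
    Continuous fun U : Matrix.unitaryGroup (Fin d) ℂ => outer (purification (S * U.1)) :=
  continuous_outer.comp <| continuous_purification.comp <|
    continuous_const.matrix_mul continuous_subtype_val

theorem acc_reducedTester {S : Matrix (Fin d) (Fin d) ℂ} (hS : S.IsHermitian) :
    acc (reducedTester T) (S * S) =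
      ∫ U, acc T (outer (purification (S * U.1))) ∂haarUnitary (Fin d) := by
  rw [acc, trace_reducedTester_mul_tpow hS]
  exact (integral_re (((continuous_trace_mul_tpow T).comp
    (continuous_outer_purification_mul_unitary S)).integrable_of_hasCompactSupport
      (HasCompactSupport.of_compactSpace _))).symm

theorem acc_reducedTester_mem {ρ : Matrix (Fin d) (Fin d) ℂ} (hρ : IsDensity ρ) {K : Set ℝ}
    (hK : Convex ℝ K) (hKc : IsClosed K)
    (hT : ∀ ψ : Fin d × Fin d → ℂ, IsUnitVec ψ → ptraceB (outer ψ) = ρ → acc T (outer ψ) ∈ K) :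
    acc (reducedTester T) ρ ∈ K := by
  obtain ⟨S, hS, rfl⟩ : ∃ S : Matrix (Fin d) (Fin d) ℂ, S.IsHermitian ∧ S * S = ρ :=
    ⟨CFC.sqrt ρ, (Matrix.nonneg_iff_posSemidef.mp (CFC.sqrt_nonneg ρ)).isHermitian,
      CFC.sqrt_mul_sqrt_self ρ hρ.1.nonneg⟩
  have mul_unitary_purifies (U : Matrix.unitaryGroup (Fin d) ℂ) :
      (S * U.1) * (S * U.1)ᴴ = S * S := by
    rw [Matrix.conjTranspose_mul, mul_assoc, ← mul_assoc U.1, ← Matrix.star_eq_conjTranspose U.1,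
      Matrix.mem_unitaryGroup_iff.mp U.2, one_mul, hS.eq]
  rw [acc_reducedTester hS]
  refine hK.integral_mem hKc (Filter.Eventually.of_forall fun U => hT _ ?_ ?_)
    (((continuous_acc T).comp
      (continuous_outer_purification_mul_unitary S)).integrable_of_hasCompactSupport
        (HasCompactSupport.of_compactSpace _))
  · exact isUnitVec_purification (by rw [mul_unitary_purifies, hρ.2])
  · rw [ptraceB_outer_purification, mul_unitary_purifies]

end HaarAverage

/-- Corollary `corollary:purification-useless`: purified samples offer no
advantage in mixed state testing. -/
theorem stmt_2 (d : ℕ) (hd : 1 ≤ d) (N : ℕ) (hN : 1 ≤ N)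
    (Qyes Qno : Set (Matrix (Fin d) (Fin d) ℂ))
    (hdens : ∀ ρ ∈ Qyes ∪ Qno, IsDensity ρ)
    (hdisj : Disjoint Qyes Qno)
    (c s : ℝ) (hs0 : 0 ≤ s) (hsc : s < c) (hc1 : c ≤ 1) :
    (∃ T : Matrix (Fin N → Fin d) (Fin N → Fin d) ℂ,
      IsTester T ∧ (∀ ρ ∈ Qyes, c ≤ acc T ρ) ∧ (∀ ρ ∈ Qno, acc T ρ ≤ s)) ↔
    (∃ T : Matrix (Fin N → Fin d × Fin d) (Fin N → Fin d × Fin d) ℂ,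
      IsTester T ∧
      (∀ ψ : Fin d × Fin d → ℂ, IsUnitVec ψ → ptraceB (outer ψ) ∈ Qyes →
        c ≤ acc T (outer ψ)) ∧
      (∀ ψ : Fin d × Fin d → ℂ, IsUnitVec ψ → ptraceB (outer ψ) ∈ Qno →
        acc T (outer ψ) ≤ s)) := by
  constructor
  · rintro ⟨T, hT, hyes, hno⟩
    refine ⟨localA T, isTester_localA hT, fun ψ _ hψ => ?_, fun ψ _ hψ => ?_⟩
    · rw [acc_localA]
      exact hyes _ hψ
    · rw [acc_localA]
      exact hno _ hψ
  · rintro ⟨T, hT, hyes, hno⟩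
    refine ⟨reducedTester T, isTester_reducedTester hT, fun ρ hρ => ?_, fun ρ hρ => ?_⟩
    · refine acc_reducedTester_mem (hdens ρ (Or.inl hρ)) (convex_Ici c) isClosed_Ici ?_
      exact fun ψ hψ hψρ => hyes ψ hψ (hψρ ▸ hρ)
    · refine acc_reducedTester_mem (hdens ρ (Or.inr hρ)) (convex_Iic s) isClosed_Iic ?_
      exact fun ψ hψ hψρ => hno ψ hψ (hψρ ▸ hρ)

end PaperStmt
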